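/- Let n be odd, q = (n−1)/2, and S_1,...,S_q ⊆ M. Consider the asymmetric envy instance where: v_{1,j}(X) = |X| for all j ≥ 2; for each i ∈ [q], agent 2i has v_{2i,1}(X) = |X ∩ S_i| and v_{2i,j}(X) = |X ∩ (M\S_i)| for j ∉ {1, 2i}; agent 2i+1 has v_{2i+1,1}(X) = |X ∩ (M\S_i)| and v_{2i+1,j}(X) = |X ∩ S_i| for j ∉ {1, 2i+1}. If a partition M = A_1 ⊔ ... ⊔ A_n is EF_a-c for an integer c ≥ 1, then for every i ∈ [q], | |S_i ∩ A_1| − |S_i|/n | ≤ 6c. -/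

import Mathlib

open Finset

/-!
Fix `S = S_i` and write `s j = |A_j ∩ S|`, `t j = |A_j \ S|`. Up to `c`, agent `2i+1` has an `s` at
least that of agent `0` and a `t` at least that of everyone else; agent `2i+2` has the same with `s`
and `t` exchanged. Chaining through both agents shows that neither of their bundles is smaller than
`A_0` by more than `3c`. As this holds for every pair, `A_0` is a nearly smallest bundle, and it is
nearly largest because agent `0` counts all items. Chaining again with the sizes controlled gives
`s j ≤ s 0 + 3c` and `t j ≤ t 0 + 3c`, so `s j` is within `6c` of `s 0` for every `j`, and hence so
is the average `|S| / n` of the `s j`.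
-/

section EnvyFree

variable {α : Type*} [DecidableEq α]

/-- The owner of `B`, with valuation `v`, does not envy the owner of `C` once some set `P` of at
most `c` items is discarded from both bundles: the `EF_a-c` condition for one ordered pair of
agents. -/
def EnvyFreeUpTo (c : ℕ) (v : Finset α → ℕ) (B C : Finset α) : Prop :=
  ∃ P : Finset α, P ⊆ B ∪ C ∧ #P ≤ c ∧ v (B \ P) ≥ v (C \ P)

namespace EnvyFreeUpTo

variable {c : ℕ} {v : Finset α → ℕ} {B C : Finset α}

theorem apply_le_add (h : EnvyFreeUpTo c v B C) (hmono : Monotone v)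
    (hdrop : ∀ X P, v X ≤ v (X \ P) + #P) : v C ≤ v B + c := by
  obtain ⟨P, -, hPc, hP⟩ := h
  calc v C ≤ v (C \ P) + #P := hdrop C P
    _ ≤ v B + c := add_le_add (hP.trans (hmono sdiff_subset)) hPc

theorem card_inter_le_add {T : Finset α} (h : EnvyFreeUpTo c v B C)
    (hv : ∀ X, v X = #(X ∩ T)) : #(C ∩ T) ≤ #(B ∩ T) + c := by
  simp only [← hv]
  refine h.apply_le_add (fun X Y hXY => ?_) (fun X P => ?_)
  · simpa only [hv] using card_le_card (inter_subset_inter_right hXY)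
  · rw [hv, hv, sdiff_inter_right_comm]
    exact tsub_le_iff_right.mp (le_card_sdiff P (X ∩ T))

theorem card_le_add (h : EnvyFreeUpTo c v B C) (hv : ∀ X, v X = #X) : #C ≤ #B + c := by
  simp only [← hv]
  refine h.apply_le_add (fun X Y hXY => ?_) (fun X P => ?_)
  · simpa only [hv] using card_le_card hXY
  · simpa only [hv] using tsub_le_iff_right.mp (le_card_sdiff P X)

end EnvyFreeUpTo

end EnvyFree

section TwoFaced

variable {ι R : Type*}

/-- Agent `p` compares itself with agent `z` by the measure `s` and with all the other agents by the
measure `t`, and its envy is at most `c` in each case. Agents `2i+1` and `2i+2` of the instance are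
two-faced towards agent `0`, with the roles of `s` and `t` exchanged. -/
structure IsTwoFaced [Add R] [LE R] (s t : ι → R) (c : R) (z p : ι) : Prop where
  ne : p ≠ z
  le_add : s z ≤ s p + c
  le_add_of_ne : ∀ j, j ≠ z → t j ≤ t p + c

theorem EnvyFreeUpTo.isTwoFaced [Semiring R] [PartialOrder R] [IsOrderedRing R]
    {α : Type*} [DecidableEq α] {A : ι → Finset α} {v : ι → Finset α → ℕ} {S T : Finset α} {c : ℕ}
    {z p : ι} (hpz : p ≠ z)
    (hEF : ∀ j, p ≠ j → EnvyFreeUpTo c (v j) (A p) (A j))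
    (hS : ∀ X, v z X = #(X ∩ S)) (hT : ∀ j, j ≠ z → j ≠ p → ∀ X, v j X = #(X ∩ T)) :
    IsTwoFaced (fun j => (#(A j ∩ S) : R)) (fun j => (#(A j ∩ T) : R)) c z p where
  ne := hpz
  le_add := by
    simpa only [Nat.cast_add] using Nat.mono_cast (α := R) ((hEF z hpz).card_inter_le_add hS)
  le_add_of_ne j hjz := by
    obtain rfl | hjp := eq_or_ne j p
    · exact le_add_of_nonneg_right c.cast_nonneg
    · simpa only [Nat.cast_add] using
        Nat.mono_cast (α := R) ((hEF j hjp.symm).card_inter_le_add (hT j hjz hjp))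

namespace IsTwoFaced

variable {s t : ι → R} {c : R} {z p r j : ι}

theorem total_le_add [CommSemiring R] [PartialOrder R] [IsOrderedRing R]
    (hp : IsTwoFaced s t c z p) (hr : IsTwoFaced t s c z r) :
    s z + t z ≤ s p + t p + 3 * c :=
  calc s z + t z ≤ (s p + c) + (t r + c) := add_le_add hp.le_add hr.le_add
    _ ≤ (s p + c) + ((t p + c) + c) := by gcongr; exact hp.le_add_of_ne r hr.ne
    _ = s p + t p + 3 * c := by ring

variable [CommRing R] [LinearOrder R] [IsStrictOrderedRing R]

theorem nonneg (hp : IsTwoFaced s t c z p) : 0 ≤ c :=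
  le_add_iff_nonneg_right _ |>.mp (hp.le_add_of_ne p hp.ne)

theorem apply_le_add (hp : IsTwoFaced s t c z p) (hmax : s p + t p ≤ s z + t z + c) (j : ι) :
    t j ≤ t z + 3 * c := by
  obtain rfl | hj := eq_or_ne j z
  · linarith [hp.nonneg]
  · calc t j ≤ t p + c := hp.le_add_of_ne j hj
      _ ≤ t p + c + (s p + c - s z) := le_add_of_nonneg_right (sub_nonneg.mpr hp.le_add)
      _ = (s p + t p) + 2 * c - s z := by ring
      _ ≤ (s z + t z + c) + 2 * c - s z := by gcongr
      _ = t z + 3 * c := by ring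

theorem abs_sub_le (hp : IsTwoFaced s t c z p) (hr : IsTwoFaced t s c z r)
    (hmax : ∀ j, s j + t j ≤ s z + t z + c) (hmin : s z + t z ≤ s j + t j + 3 * c) :
    |s z - s j| ≤ 6 * c := by
  have ht : t j ≤ t z + 3 * c := hp.apply_le_add (hmax p) j
  have hs : s j ≤ s z + 3 * c := hr.apply_le_add (by simpa only [add_comm] using hmax r) j
  rw [abs_sub_le_iff]
  constructor <;> linarith [hp.nonneg]

end IsTwoFaced

end TwoFaced

open scoped BigOperators in
theorem abs_sub_sum_div_card_le {ι K : Type*} [Fintype ι] [Nonempty ι] [Field K] [LinearOrder K]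
    [IsStrictOrderedRing K] {f : ι → K} {x C : K} (h : ∀ j, |x - f j| ≤ C) :
    |x - (∑ j, f j) / Fintype.card ι| ≤ C := by
  rw [← Fintype.expect_eq_sum_div_card]
  calc |x - 𝔼 j, f j| = |𝔼 j, (x - f j)| := by rw [expect_sub_distrib, Fintype.expect_const]
    _ ≤ 𝔼 j, |x - f j| := abs_expect_le _ _
    _ ≤ C := expect_le univ_nonempty fun j _ => h j

theorem sum_card_inter_eq_card {ι α : Type*} [Fintype ι] [DecidableEq α] {A : ι → Finset α}
    {S : Finset α} (hdisj : ∀ i j, i ≠ j → Disjoint (A i) (A j)) (hS : S ⊆ univ.biUnion A) :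
    ∑ j, #(A j ∩ S) = #S := by
  rw [← card_biUnion fun i _ j _ hij => (hdisj i j hij).mono inter_subset_left inter_subset_left,
    ← biUnion_inter, inter_eq_right.mpr hS]

theorem card_inter_add_card_inter_sdiff {α : Type*} [DecidableEq α] {B M : Finset α} (h : B ⊆ M)
    (S : Finset α) : #(B ∩ S) + #(B ∩ (M \ S)) = #B := by
  rw [← inter_sdiff_assoc, inter_eq_left.mpr h, card_inter_add_card_sdiff]

theorem lower_bound_instance_general {ι κ α : Type*} [Fintype ι] [DecidableEq α]
    {M : Finset α} {S : κ → Finset α} {v : ι → ι → Finset α → ℕ}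
    {z : ι} {p r : κ → ι} (hpz : ∀ k, p k ≠ z) (hrz : ∀ k, r k ≠ z)
    (hpr : ∀ j, j ≠ z → ∃ k, j = p k ∨ j = r k)
    (hvz : ∀ j, j ≠ z → ∀ X, v z j X = #X)
    (hvpz : ∀ k X, v (p k) z X = #(X ∩ S k))
    (hvp : ∀ k j, j ≠ z → j ≠ p k → ∀ X, v (p k) j X = #(X ∩ (M \ S k)))
    (hvrz : ∀ k X, v (r k) z X = #(X ∩ (M \ S k)))
    (hvr : ∀ k j, j ≠ z → j ≠ r k → ∀ X, v (r k) j X = #(X ∩ S k))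
    {A : ι → Finset α} (hdisj : ∀ i j, i ≠ j → Disjoint (A i) (A j))
    (hcover : univ.biUnion A = M) {c : ℕ}
    (hEF : ∀ i j, i ≠ j → EnvyFreeUpTo c (v i j) (A i) (A j))
    {k : κ} (hSM : S k ⊆ M) :
    |(#(S k ∩ A z) : ℝ) - #(S k) / Fintype.card ι| ≤ 6 * c := by
  let s (k : κ) (j : ι) : ℝ := #(A j ∩ S k)
  let t (k : κ) (j : ι) : ℝ := #(A j ∩ (M \ S k))
  have hp (k : κ) : IsTwoFaced (s k) (t k) c z (p k) :=
    EnvyFreeUpTo.isTwoFaced (hpz k) (hEF (p k)) (hvpz k) (hvp k)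
  have hr (k : κ) : IsTwoFaced (t k) (s k) c z (r k) :=
    EnvyFreeUpTo.isTwoFaced (hrz k) (hEF (r k)) (hvrz k) (hvr k)
  have htotal (k : κ) (j : ι) : s k j + t k j = #(A j) := by
    have hAM : A j ⊆ M := hcover ▸ subset_biUnion_of_mem A (mem_univ j)
    simp only [s, t]
    exact mod_cast card_inter_add_card_inter_sdiff hAM (S k)
  have hmax (j : ι) : (#(A j) : ℝ) ≤ #(A z) + c := by
    obtain rfl | hj := eq_or_ne j z
    · exact le_add_of_nonneg_right c.cast_nonneg
    · exact mod_cast (hEF z j hj.symm).card_le_add (hvz j hj)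
  have hmin (j : ι) : (#(A z) : ℝ) ≤ #(A j) + 3 * c := by
    obtain rfl | hj := eq_or_ne j z
    · exact le_add_of_nonneg_right (by positivity)
    · obtain ⟨l, rfl | rfl⟩ := hpr j hj
      · simpa only [htotal] using (hp l).total_le_add (hr l)
      · simpa only [add_comm (t l _), htotal] using (hr l).total_le_add (hp l)
  have hclose (j : ι) : |s k z - s k j| ≤ 6 * c :=
    (hp k).abs_sub_le (hr k) (by simpa only [htotal] using hmax)
      (by simpa only [htotal] using hmin j)
  have : Nonempty ι := ⟨z⟩
  rw [inter_comm, ← sum_card_inter_eq_card (S := S k) hdisj (hcover ▸ hSM), Nat.cast_sum]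
  exact abs_sub_sum_div_card_le hclose

theorem exists_eq_two_mul_add_one_or_two {q m : ℕ} (hm0 : m ≠ 0) (hm : m ≤ 2 * q) :
    ∃ k : Fin q, m = 2 * (k : ℕ) + 1 ∨ m = 2 * (k : ℕ) + 2 :=
  ⟨⟨(m - 1) / 2, by omega⟩, by simp only; omega⟩

/-- Lower-bound instance: with agent `0` counting all items, agent `2i+1`
(resp. `2i+2`) counting `S i` toward agent `0` and its complement toward
everyone else (resp. symmetrically), any EF_a-c allocation satisfies
`||S_i ∩ A_0| - |S_i|/n| ≤ 6c` for every `i`. -/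
theorem lower_bound_instance {α : Type*} [DecidableEq α] {n q : ℕ}
    (hodd : Odd n) (hn : n = 2 * q + 1)
    (M : Finset α) (S : Fin q → Finset α) (hSM : ∀ i, S i ⊆ M)
    (vv : Fin n → Fin n → Finset α → ℕ)
    (h1 : ∀ j : Fin n, j ≠ ⟨0, by omega⟩ → ∀ X : Finset α, vv ⟨0, by omega⟩ j X = X.card)
    (h2a : ∀ i : Fin q, ∀ X : Finset α,
      vv ⟨2 * (i : ℕ) + 1, by have := i.isLt; omega⟩ ⟨0, by omega⟩ X = (X ∩ S i).card)
    (h2b : ∀ i : Fin q, ∀ j : Fin n, j ≠ ⟨0, by omega⟩ →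
      j ≠ ⟨2 * (i : ℕ) + 1, by have := i.isLt; omega⟩ → ∀ X : Finset α,
      vv ⟨2 * (i : ℕ) + 1, by have := i.isLt; omega⟩ j X = (X ∩ (M \ S i)).card)
    (h3a : ∀ i : Fin q, ∀ X : Finset α,
      vv ⟨2 * (i : ℕ) + 2, by have := i.isLt; omega⟩ ⟨0, by omega⟩ X = (X ∩ (M \ S i)).card)
    (h3b : ∀ i : Fin q, ∀ j : Fin n, j ≠ ⟨0, by omega⟩ →
      j ≠ ⟨2 * (i : ℕ) + 2, by have := i.isLt; omega⟩ → ∀ X : Finset α,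
      vv ⟨2 * (i : ℕ) + 2, by have := i.isLt; omega⟩ j X = (X ∩ S i).card)
    (A : Fin n → Finset α)
    (hdisj : ∀ i j : Fin n, i ≠ j → Disjoint (A i) (A j))
    (hcover : Finset.univ.biUnion A = M)
    (c : ℕ) (hc : 1 ≤ c)
    (hEF : ∀ i j : Fin n, i ≠ j → ∃ P : Finset α, P ⊆ A i ∪ A j ∧ P.card ≤ c ∧
      vv i j (A i \ P) ≥ vv i j (A j \ P)) :
    ∀ i : Fin q,
      |((S i ∩ A ⟨0, by omega⟩).card : ℝ) - ((S i).card : ℝ) / n| ≤ 6 * c := by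
  intro i
  simpa only [Fintype.card_fin] using lower_bound_instance_general
    (fun _ => by simp [Fin.ext_iff]) (fun _ => by simp [Fin.ext_iff])
    (fun j hj => by
      simpa only [Fin.ext_iff] using
        exists_eq_two_mul_add_one_or_two (fun h => hj (Fin.ext h)) (by omega))
    h1 h2a h2b h3a h3b hdisj hcover hEF (hSM i)
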